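/- arXiv:2009.12962 — 2 statements merged into one kernel-verified Lean document; each statement's English description precedes it below -/
import Mathlib

section
/- Let N ≥ 1, r, s, c ∈ (0,1), α_s, α_r, α_c > 0. Let Ω_s ⊂ ℝ^N be a bounded nonempty open set and Ω_r = ℝ^N ∖ closure(Ω_s). Suppose α > 0, k > 0 and there exists C > 0 such that for every v ∈ C_c^∞(ℝ^N) with ‖v‖_{L²(ℝ^N)} ≤ k ‖v‖_{L¹(ℝ^N)}, one has ‖v‖_{L²(ℝ^N)}^{2 + 4α/N} ≤ C ‖v‖_{L¹(ℝ^N)}^{4α/N} Q(v). Then α ≥ r. -/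
open MeasureTheory ENNReal

/-- The squared Gagliardo seminorm `[v]_{s,Ω}²` on an open set `Ω ⊆ ℝ^N`. -/
noncomputable def gagliardoSq {N : ℕ} (s : ℝ) (Ω : Set (EuclideanSpace ℝ (Fin N)))
    (v : EuclideanSpace ℝ (Fin N) → ℝ) : ℝ≥0∞ :=
  ∫⁻ x in Ω, ∫⁻ y in Ω, ENNReal.ofReal ((v x - v y) ^ 2 / ‖x - y‖ ^ ((N : ℝ) + 2 * s))

/-- The cross (coupling) term between the two domains. -/
noncomputable def crossTerm {N : ℕ} (c : ℝ) (Ωs Ωr : Set (EuclideanSpace ℝ (Fin N)))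
    (v : EuclideanSpace ℝ (Fin N) → ℝ) : ℝ≥0∞ :=
  ∫⁻ x in Ωs, ∫⁻ y in Ωr, ENNReal.ofReal ((v x - v y) ^ 2 / ‖x - y‖ ^ ((N : ℝ) + 2 * c))

/-- The energy form `Q` of the coupled nonlocal problem. -/
noncomputable def energyQ {N : ℕ} (r s c αs αr αc : ℝ)
    (Ωs Ωr : Set (EuclideanSpace ℝ (Fin N))) (v : EuclideanSpace ℝ (Fin N) → ℝ) : ℝ≥0∞ :=
  ENNReal.ofReal (αs / 4) * gagliardoSq s Ωs v + ENNReal.ofReal (αr / 4) * gagliardoSq r Ωr v +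
    ENNReal.ofReal (αc / 2) * crossTerm c Ωs Ωr v

/-!
Copies of a fixed bump `φ`, stretched by a factor `t` and moved far away from `Ωs`, do not see the
first term of the energy. Their `L²` norm scales like `t ^ (N / 2)`, their `L¹` norm like `t ^ N`,
and `[·]_{r, ℝ^N}²` like `t ^ (N - 2 r)`; moving the copy far enough away makes the coupling term at
most of that order as well. The constraint `‖v‖₂ ≤ k ‖v‖₁` holds for large `t`, and letting
`t → ∞` in the Nash inequality compares `t ^ (N + 2 α)` with `t ^ (4 α + N - 2 r)`, so `r ≤ α`.
-/

open scoped NNReal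

lemma eventually_ofReal_rpow_mul_lt {p q : ℝ} (hpq : p < q) {a b : ℝ≥0∞} (ha : a ≠ ∞)
    (hb : b ≠ 0) :
    ∀ᶠ t : ℝ in Filter.atTop,
      ENNReal.ofReal (t ^ p) * a < ENNReal.ofReal (t ^ q) * b := by
  have hlim : Filter.Tendsto (fun t : ℝ => ENNReal.ofReal (t ^ (q - p)) * b) Filter.atTop
      (nhds ∞) := by
    rw [← ENNReal.top_mul hb]
    exact ENNReal.Tendsto.mul_const
      (ENNReal.tendsto_ofReal_atTop.comp (tendsto_rpow_atTop (sub_pos.2 hpq)))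
      (Or.inl ENNReal.top_ne_zero)
  filter_upwards [hlim.eventually_const_lt ha.lt_top, Filter.eventually_gt_atTop 0] with t hlt ht
  have hsplit : ENNReal.ofReal (t ^ q) = ENNReal.ofReal (t ^ p) * ENNReal.ofReal (t ^ (q - p)) := by
    rw [← ENNReal.ofReal_mul (by positivity), ← Real.rpow_add ht, add_sub_cancel]
  rw [hsplit, mul_assoc]
  have hpos : 0 < ENNReal.ofReal (t ^ p) := ENNReal.ofReal_pos.2 (by positivity)
  exact ENNReal.mul_lt_mul_right hpos.ne' ENNReal.ofReal_ne_top hlt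

lemma ofReal_rpow_mul_rpow {t : ℝ} (ht : 0 < t) (p z : ℝ) {a : ℝ≥0∞} (ha : a ≠ ∞) :
    (ENNReal.ofReal (t ^ p) * a) ^ z = ENNReal.ofReal (t ^ (p * z)) * a ^ z := by
  rw [ENNReal.mul_rpow_of_ne_top ENNReal.ofReal_ne_top ha,
    ENNReal.ofReal_rpow_of_pos (by positivity), ← Real.rpow_mul ht.le]

lemma exists_scaled_nash_lt {n α r : ℝ} (hn : 0 < n) (hαr : α < r)
    {A B k C K : ℝ≥0∞} (hA : A ≠ 0) (hA' : A ≠ ∞) (hB : B ≠ 0) (hB' : B ≠ ∞) (hk : k ≠ 0)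
    (hC : C ≠ ∞) (hK : K ≠ ∞) :
    ∃ t : ℝ, 0 < t ∧ ENNReal.ofReal (t ^ (n / 2)) * A ≤ k * (ENNReal.ofReal (t ^ n) * B) ∧
      C * (ENNReal.ofReal (t ^ n) * B) ^ (4 * α / n) * (ENNReal.ofReal (t ^ (n - 2 * r)) * K) <
        (ENNReal.ofReal (t ^ (n / 2)) * A) ^ (2 + 4 * α / n) := by
  set q := 4 * α / n
  have hnq : n * q = 4 * α := mul_div_cancel₀ _ hn.ne'
  have hA_pow : A ^ (2 + q) ≠ 0 := (ENNReal.rpow_pos (pos_iff_ne_zero.2 hA) hA').ne'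
  have hB_pow : B ^ q ≠ ∞ := ENNReal.rpow_ne_top_of_ne_zero hB hB'
  have hconstraint := eventually_ofReal_rpow_mul_lt (half_lt_self hn) hA' (mul_ne_zero hk hB)
  have hgap := eventually_ofReal_rpow_mul_lt (p := n * q + (n - 2 * r)) (q := n / 2 * (2 + q))
    (by linarith) (a := C * B ^ q * K) (by finiteness) hA_pow
  obtain ⟨t, ⟨hconstraint_t, hgap_t⟩, ht⟩ :=
    ((hconstraint.and hgap).and (Filter.eventually_gt_atTop 0)).exists
  refine ⟨t, ht, (hconstraint_t.trans_eq (mul_left_comm _ _ _)).le, ?_⟩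
  calc C * (ENNReal.ofReal (t ^ n) * B) ^ q * (ENNReal.ofReal (t ^ (n - 2 * r)) * K)
      = ENNReal.ofReal (t ^ (n * q + (n - 2 * r))) * (C * B ^ q * K) := by
        rw [ofReal_rpow_mul_rpow ht _ _ hB', Real.rpow_add ht, ENNReal.ofReal_mul (by positivity)]
        ring
    _ < ENNReal.ofReal (t ^ (n / 2 * (2 + q))) * A ^ (2 + q) := hgap_t
    _ = (ENNReal.ofReal (t ^ (n / 2)) * A) ^ (2 + q) :=
        (ofReal_rpow_mul_rpow ht _ _ hA').symm

section Rescale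

variable {E F : Type*} [NormedAddCommGroup E] [NormedSpace ℝ E]

/-- The copy of `φ` stretched by the factor `t` and moved from the origin to `a`; these copies are
the test functions for the Nash inequality. -/
noncomputable def rescale (a : E) (t : ℝ) (φ : E → F) : E → F :=
  fun x => φ (t⁻¹ • (x - a))

lemma contDiff_rescale [NormedAddCommGroup F] [NormedSpace ℝ F] {n : WithTop ℕ∞} {φ : E → F}
    (hφ : ContDiff ℝ n φ) (a : E) (t : ℝ) : ContDiff ℝ n (rescale a t φ) :=
  hφ.comp (by fun_prop)

lemma hasCompactSupport_rescale [Zero F] {φ : E → F} (hφ : HasCompactSupport φ) (a : E) {t : ℝ}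
    (ht : t ≠ 0) : HasCompactSupport (rescale a t φ) :=
  hφ.comp_homeomorph
    ((Homeomorph.subRight a).trans (Homeomorph.smulOfNeZero t⁻¹ (inv_ne_zero ht)))

lemma le_dist_of_mem_support_rescale [Zero F] {φ : E → F} {ρ R t : ℝ}
    (hφ : ∀ x ∈ Function.support φ, ‖x‖ ≤ ρ) (ht : 0 < t) {a x y : E} (hx : ‖x‖ ≤ R)
    (hy : y ∈ Function.support (rescale a t φ)) : ‖a‖ - R - t * ρ ≤ dist x y := by
  have hya : dist y a ≤ t * ρ := by
    have hnorm : ‖t⁻¹ • (y - a)‖ ≤ ρ := hφ _ hy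
    rwa [norm_smul, norm_inv, Real.norm_of_nonneg ht.le,
      inv_mul_le_iff₀ ht, ← dist_eq_norm] at hnorm
  have hax : ‖a‖ ≤ dist x a + ‖x‖ := by
    simpa only [dist_zero_right, dist_comm] using dist_triangle a x 0
  linarith [dist_triangle x y a]

lemma exists_forall_le_dist_support_rescale [Nontrivial E] [Zero F] {φ : E → F}
    (hφ : HasCompactSupport φ) {Ω : Set E} (hΩ : Bornology.IsBounded Ω) (M : ℝ) {t : ℝ}
    (ht : 0 < t) :
    ∃ a : E, ∀ x ∈ Ω, ∀ y ∈ Function.support (rescale a t φ), M ≤ dist x y := by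
  obtain ⟨R, -, hR⟩ := hΩ.exists_pos_norm_le
  obtain ⟨ρ, -, hρ⟩ := hφ.isCompact.isBounded.exists_pos_norm_le
  obtain ⟨a, ha⟩ := NormedSpace.exists_lt_norm ℝ E (R + t * ρ + M)
  refine ⟨a, fun x hx y hy => ?_⟩
  have hdist := le_dist_of_mem_support_rescale
    (fun z hz => hρ z (subset_tsupport φ hz)) ht (hR x hx) hy
  linarith

variable [MeasurableSpace E] [BorelSpace E]

lemma measurableEmbedding_inv_smul_sub (a : E) {t : ℝ} (ht : t ≠ 0) :
    MeasurableEmbedding fun x : E => t⁻¹ • (x - a) :=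
  ((Homeomorph.subRight a).trans
    (Homeomorph.smulOfNeZero t⁻¹ (inv_ne_zero ht))).measurableEmbedding

variable [FiniteDimensional ℝ E] (μ : Measure E) [μ.IsAddHaarMeasure]

lemma map_inv_smul_sub_addHaar (a : E) {t : ℝ} (ht : 0 < t) :
    μ.map (fun x => t⁻¹ • (x - a)) = ENNReal.ofReal (t ^ Module.finrank ℝ E) • μ := by
  have hcomp : (fun x : E => t⁻¹ • (x - a)) = (t⁻¹ • ·) ∘ (· - a) := rfl
  rw [hcomp, ← Measure.map_map (measurable_const_smul _) (measurable_sub_const a),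
    map_sub_right_eq_self, Measure.map_addHaar_smul μ (inv_ne_zero ht.ne'), inv_pow, inv_inv,
    abs_of_pos (by positivity)]

lemma lintegral_rescale (f : E → ℝ≥0∞) (a : E) {t : ℝ} (ht : 0 < t) :
    ∫⁻ x, rescale a t f x ∂μ = ENNReal.ofReal (t ^ Module.finrank ℝ E) * ∫⁻ x, f x ∂μ := by
  unfold rescale
  rw [← (measurableEmbedding_inv_smul_sub a ht.ne').lintegral_map,
    map_inv_smul_sub_addHaar μ a ht, lintegral_smul_measure, smul_eq_mul]

lemma lintegral_lintegral_rescale (g : E → E → ℝ≥0∞) (a : E) {t : ℝ} (ht : 0 < t) :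
    ∫⁻ x, ∫⁻ y, rescale a t (rescale a t g x) y ∂μ ∂μ =
      ENNReal.ofReal (t ^ Module.finrank ℝ E) *
        (ENNReal.ofReal (t ^ Module.finrank ℝ E) * ∫⁻ x, ∫⁻ y, g x y ∂μ ∂μ) := by
  rw [← lintegral_const_mul' _ _ ENNReal.ofReal_ne_top, ← lintegral_rescale μ _ a ht]
  exact lintegral_congr fun x => lintegral_rescale μ _ a ht

lemma eLpNorm_rescale [NormedAddCommGroup F] (φ : E → F) (p : ℝ≥0∞) (a : E) {t : ℝ}
    (ht : 0 < t) :
    eLpNorm (rescale a t φ) p μ =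
      ENNReal.ofReal (t ^ (Module.finrank ℝ E / p.toReal)) * eLpNorm φ p μ := by
  have hcomp : rescale a t φ = φ ∘ fun x => t⁻¹ • (x - a) := rfl
  have hpos : 0 < t ^ Module.finrank ℝ E := by positivity
  rw [hcomp, ← (measurableEmbedding_inv_smul_sub a ht.ne').eLpNorm_map_measure,
    map_inv_smul_sub_addHaar μ a ht,
    eLpNorm_smul_measure_of_ne_zero (ENNReal.ofReal_pos.2 hpos).ne', smul_eq_mul,
    ENNReal.ofReal_rpow_of_pos hpos, ← Real.rpow_natCast, ← Real.rpow_mul ht.le,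
    one_div, ENNReal.toReal_inv, ← div_eq_mul_inv]

end Rescale

section Kernel

variable {E : Type*} [NormedAddCommGroup E] [NormedSpace ℝ E] [FiniteDimensional ℝ E]
  [MeasurableSpace E] [BorelSpace E] (μ : Measure E) [μ.IsAddHaarMeasure]

lemma integrableOn_Ioi_min_sq_one_mul_rpow {r : ℝ} (hr : r ∈ Set.Ioo (0 : ℝ) 1) :
    IntegrableOn (fun t : ℝ => min (t ^ 2) 1 * t ^ (-1 - 2 * r)) (Set.Ioi 0) := by
  rw [← Set.Ioc_union_Ioi_eq_Ioi (zero_le_one' ℝ)]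
  refine IntegrableOn.union ?_ ?_
  · have hint : IntegrableOn (fun t : ℝ => t ^ (1 - 2 * r)) (Set.Ioc 0 1) :=
      (intervalIntegrable_iff_integrableOn_Ioc_of_le zero_le_one).1
        (intervalIntegral.intervalIntegrable_rpow' (by linarith [hr.2]))
    refine hint.congr_fun (fun t ht => ?_) measurableSet_Ioc
    have hmin : min (t ^ 2) 1 = t ^ (2 : ℝ) := by
      rw [Real.rpow_two, min_eq_left (pow_le_one₀ ht.1.le ht.2)]
    dsimp only
    rw [hmin, ← Real.rpow_add ht.1]
    ring_nf
  · have hint : IntegrableOn (fun t : ℝ => t ^ (-1 - 2 * r)) (Set.Ioi 1) :=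
      integrableOn_Ioi_rpow_of_lt (by linarith [hr.1]) one_pos
    refine hint.congr_fun (fun t ht => ?_) measurableSet_Ioi
    have hmin : min (t ^ 2) 1 = 1 := min_eq_right (one_le_pow₀ (Set.mem_Ioi.1 ht).le)
    dsimp only
    rw [hmin, one_mul]

lemma integrable_min_norm_sq_one_div_norm_rpow {r : ℝ} (hr : r ∈ Set.Ioo (0 : ℝ) 1) :
    Integrable (fun h : E => min (‖h‖ ^ 2) 1 / ‖h‖ ^ (Module.finrank ℝ E + 2 * r)) μ := by
  rcases subsingleton_or_nontrivial E with _ | _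
  · exact Integrable.of_finite
  refine (integrable_fun_norm_addHaar μ
    (f := fun t => min (t ^ 2) 1 / t ^ (Module.finrank ℝ E + 2 * r))).2 ?_
  refine (integrableOn_Ioi_min_sq_one_mul_rpow hr).congr_fun (fun t ht => ?_) measurableSet_Ioi
  have hpow : t ^ (-1 - 2 * r) =
      t ^ (Module.finrank ℝ E - 1) / t ^ (Module.finrank ℝ E + 2 * r) := by
    rw [← Real.rpow_natCast, Nat.cast_pred Module.finrank_pos, ← Real.rpow_sub ht]
    ring_nf
  dsimp only
  rw [smul_eq_mul, hpow]
  ring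

end Kernel

section Translation

lemma sq_sub_le_of_lipschitzWith_of_abs_le {X : Type*} [PseudoMetricSpace X] {v : X → ℝ} {L : ℝ≥0}
    {M : ℝ} (hL : LipschitzWith L v) (hM : ∀ x, |v x| ≤ M) (x y : X) :
    (v x - v y) ^ 2 ≤ (L ^ 2 + (2 * M) ^ 2) * min (dist x y ^ 2) 1 := by
  have hLip : (v x - v y) ^ 2 ≤ L ^ 2 * dist x y ^ 2 := by
    rw [← mul_pow, ← sq_abs, ← Real.dist_eq]
    exact pow_le_pow_left₀ dist_nonneg (hL.dist_le_mul x y) 2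
  have hbound : (v x - v y) ^ 2 ≤ (2 * M) ^ 2 := by
    rw [← sq_abs]
    exact pow_le_pow_left₀ (abs_nonneg _)
      ((abs_sub _ _).trans (by linarith [hM x, hM y])) 2
  rcases min_cases (dist x y ^ 2) 1 with ⟨hmin, _⟩ | ⟨hmin, _⟩ <;> rw [hmin]
  · nlinarith [sq_nonneg (2 * M), sq_nonneg (dist x y)]
  · nlinarith [sq_nonneg (L : ℝ)]

lemma lintegral_sq_sub_translate_le {E : Type*} [NormedAddCommGroup E] [MeasurableSpace E]
    [BorelSpace E] (μ : Measure E) [μ.IsAddRightInvariant] {v : E → ℝ} {L : ℝ≥0} {M : ℝ}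
    (hL : LipschitzWith L v) (hM : ∀ x, |v x| ≤ M) (h : E) :
    ∫⁻ x, ENNReal.ofReal ((v x - v (x - h)) ^ 2) ∂μ ≤
      ENNReal.ofReal ((L ^ 2 + (2 * M) ^ 2) * min (‖h‖ ^ 2) 1) * (2 * μ (tsupport v)) := by
  set S := tsupport v
  set b := ENNReal.ofReal ((L ^ 2 + (2 * M) ^ 2) * min (‖h‖ ^ 2) 1)
  have hS : MeasurableSet (S ∪ (· + -h) ⁻¹' S) :=
    (isClosed_tsupport v).measurableSet.union
      (measurable_add_const (-h) (isClosed_tsupport v).measurableSet)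
  have hpt : ∀ x, ENNReal.ofReal ((v x - v (x - h)) ^ 2) ≤
      (S ∪ (· + -h) ⁻¹' S).indicator (fun _ => b) x := by
    intro x
    by_cases hx : x ∈ S ∪ (· + -h) ⁻¹' S
    · rw [Set.indicator_of_mem hx]
      refine ENNReal.ofReal_le_ofReal ?_
      simpa only [dist_self_sub_right] using sq_sub_le_of_lipschitzWith_of_abs_le hL hM x (x - h)
    · obtain ⟨hx, hxh⟩ := not_or.1 hx
      rw [Set.mem_preimage, ← sub_eq_add_neg] at hxh
      simp [image_eq_zero_of_notMem_tsupport hx, image_eq_zero_of_notMem_tsupport hxh]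
  calc ∫⁻ x, ENNReal.ofReal ((v x - v (x - h)) ^ 2) ∂μ
      ≤ b * μ (S ∪ (· + -h) ⁻¹' S) :=
        (lintegral_mono hpt).trans_eq (lintegral_indicator_const hS b)
    _ ≤ b * (μ S + μ ((· + -h) ⁻¹' S)) := by gcongr; exact measure_union_le _ _
    _ = b * (2 * μ S) := by rw [measure_preimage_add_right, two_mul]

end Translation

lemma eqOn_zero_of_forall_le_dist_support {X F : Type*} [PseudoMetricSpace X] [Zero F]
    {v : X → F} {S : Set X} {M : ℝ} (hM : 0 < M)
    (hv : ∀ x ∈ S, ∀ y ∈ Function.support v, M ≤ dist x y) : Set.EqOn v (fun _ => 0) S := by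
  intro x hx
  by_contra hne
  exact hM.not_ge ((hv x hx x hne).trans_eq (dist_self x))

section Energy

variable {N : ℕ}

local notation "𝔼" => EuclideanSpace ℝ (Fin N)

lemma gagliardoSq_mono (r : ℝ) {Ω Ω' : Set 𝔼} (h : Ω ⊆ Ω') (v : 𝔼 → ℝ) :
    gagliardoSq r Ω v ≤ gagliardoSq r Ω' v :=
  lintegral_mono' (Measure.restrict_mono h le_rfl) fun _ => lintegral_mono_set h

lemma gagliardoSq_eq_zero_of_eqOn_const (s : ℝ) {Ω : Set 𝔼} {v : 𝔼 → ℝ} {b : ℝ}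
    (hv : Set.EqOn v (fun _ => b) Ω) : gagliardoSq s Ω v = 0 := by
  refine le_antisymm ?_ zero_le
  calc gagliardoSq s Ω v ≤ ∫⁻ _ in Ω, ∫⁻ _ in Ω, 0 :=
        setLIntegral_mono (by fun_prop) fun x hx =>
          setLIntegral_mono measurable_const fun y hy => by simp [hv hx, hv hy]
    _ = 0 := by simp only [lintegral_zero]

lemma gagliardoSq_univ_rescale (r : ℝ) (φ : 𝔼 → ℝ) (a : 𝔼) {t : ℝ} (ht : 0 < t) :
    gagliardoSq r Set.univ (rescale a t φ) =
      ENNReal.ofReal (t ^ (N - 2 * r)) * gagliardoSq r Set.univ φ := by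
  set g : 𝔼 → 𝔼 → ℝ≥0∞ := fun x y =>
    ENNReal.ofReal ((φ x - φ y) ^ 2 / ‖x - y‖ ^ (N + 2 * r))
  have hkernel : ∀ x y, ENNReal.ofReal ((rescale a t φ x - rescale a t φ y) ^ 2 /
      ‖x - y‖ ^ (N + 2 * r)) =
        ENNReal.ofReal (t ^ (-(N + 2 * r))) * rescale a t (rescale a t g x) y := by
    intro x y
    have hnorm : ‖t⁻¹ • (x - a) - t⁻¹ • (y - a)‖ = t⁻¹ * ‖x - y‖ := by
      rw [← smul_sub, sub_sub_sub_cancel_right, norm_smul, Real.norm_of_nonneg (by positivity)]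
    simp only [rescale, g]
    rw [← ENNReal.ofReal_mul (by positivity), hnorm,
      Real.mul_rpow (by positivity) (norm_nonneg _), Real.rpow_neg ht.le, Real.inv_rpow ht.le,
      mul_div_assoc', mul_div_mul_left _ _ (by positivity)]
  have hpow : t ^ (N - 2 * r) = t ^ (-(N + 2 * r)) * (t ^ N * t ^ N) := by
    rw [← Real.rpow_natCast, ← Real.rpow_add ht, ← Real.rpow_add ht]
    ring_nf
  simp only [gagliardoSq, Measure.restrict_univ, hkernel,
    lintegral_const_mul' _ _ ENNReal.ofReal_ne_top]
  rw [lintegral_lintegral_rescale volume g a ht, finrank_euclideanSpace_fin, hpow,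
    ENNReal.ofReal_mul (by positivity), ENNReal.ofReal_mul (by positivity)]
  simp only [mul_assoc, g]

lemma gagliardoSq_univ_eq_lintegral_translate (r : ℝ) {v : 𝔼 → ℝ} (hv : Measurable v) :
    gagliardoSq r Set.univ v =
      ∫⁻ h, (∫⁻ x, ENNReal.ofReal ((v x - v (x - h)) ^ 2)) *
        ENNReal.ofReal (‖h‖ ^ (N + 2 * r))⁻¹ := by
  calc gagliardoSq r Set.univ v
      = ∫⁻ x, ∫⁻ h, ENNReal.ofReal ((v x - v (x - h)) ^ 2 / ‖h‖ ^ (N + 2 * r)) := by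
        simp only [gagliardoSq, Measure.restrict_univ]
        refine lintegral_congr fun x => ?_
        rw [← lintegral_sub_left_eq_self
          (fun h => ENNReal.ofReal ((v x - v (x - h)) ^ 2 / ‖h‖ ^ (N + 2 * r))) x]
        simp only [_root_.sub_sub_cancel]
    _ = ∫⁻ h, ∫⁻ x, ENNReal.ofReal ((v x - v (x - h)) ^ 2 / ‖h‖ ^ (N + 2 * r)) :=
        lintegral_lintegral_swap (by fun_prop)
    _ = _ := by
        refine lintegral_congr fun h => ?_
        simp only [div_eq_mul_inv, ENNReal.ofReal_mul (sq_nonneg _)]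
        exact lintegral_mul_const' _ _ ENNReal.ofReal_ne_top

lemma gagliardoSq_lt_top {r : ℝ} (hr : r ∈ Set.Ioo (0 : ℝ) 1) (Ω : Set 𝔼) {v : 𝔼 → ℝ} {L : ℝ≥0}
    (hL : LipschitzWith L v) (hv : HasCompactSupport v) : gagliardoSq r Ω v < ∞ := by
  obtain ⟨M, hM⟩ := hv.exists_bound_of_continuous hL.continuous
  set D : ℝ := L ^ 2 + (2 * M) ^ 2
  set m : ℝ≥0∞ := 2 * volume (tsupport v)
  have hm : m < ∞ := ENNReal.mul_lt_top ENNReal.ofNat_lt_top hv.isCompact.measure_lt_top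
  calc gagliardoSq r Ω v
      ≤ ∫⁻ h, (∫⁻ x, ENNReal.ofReal ((v x - v (x - h)) ^ 2)) *
          ENNReal.ofReal (‖h‖ ^ (N + 2 * r))⁻¹ :=
        (gagliardoSq_mono r (Set.subset_univ Ω) v).trans_eq
          (gagliardoSq_univ_eq_lintegral_translate r hL.continuous.measurable)
    _ ≤ ∫⁻ h : 𝔼, ENNReal.ofReal (D * min (‖h‖ ^ 2) 1) * m *
          ENNReal.ofReal (‖h‖ ^ (N + 2 * r))⁻¹ := by
        gcongr with h
        exact lintegral_sq_sub_translate_le volume hL hM h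
    _ = m * ∫⁻ h : 𝔼, ENNReal.ofReal (D * (min (‖h‖ ^ 2) 1 / ‖h‖ ^ (N + 2 * r))) := by
        rw [← lintegral_const_mul' _ _ hm.ne]
        refine lintegral_congr fun h => ?_
        rw [← mul_div_assoc, div_eq_mul_inv (D * _),
          ENNReal.ofReal_mul (p := D * _) (by positivity), mul_right_comm, mul_comm m]
    _ < ∞ := by
        refine ENNReal.mul_lt_top hm (Integrable.lintegral_lt_top (Integrable.const_mul ?_ D))
        simpa only [finrank_euclideanSpace_fin] using
          integrable_min_norm_sq_one_div_norm_rpow (E := 𝔼) volume hr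

lemma crossTerm_le_of_le_dist {c : ℝ} (hc : 0 ≤ N + 2 * c) {Ωs : Set 𝔼} (Ωr : Set 𝔼)
    {v : 𝔼 → ℝ} {M : ℝ} (hM : 0 < M)
    (hv : ∀ x ∈ Ωs, ∀ y ∈ Function.support v, M ≤ dist x y) :
    crossTerm c Ωs Ωr v ≤
      ENNReal.ofReal (M ^ (-(N + 2 * c))) * eLpNorm v 2 volume ^ 2 * volume Ωs := by
  have hL2 : eLpNorm v 2 volume ^ 2 = ∫⁻ y, ENNReal.ofReal (v y ^ 2) := by
    simpa [Real.enorm_eq_ofReal_abs, ← ENNReal.ofReal_pow] using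
      eLpNorm_nnreal_pow_eq_lintegral (f := v) (μ := volume) (p := 2) two_ne_zero
  rw [← setLIntegral_const, hL2, ← lintegral_const_mul' _ _ ENNReal.ofReal_ne_top]
  refine setLIntegral_mono measurable_const fun x hx => ?_
  refine (setLIntegral_le_lintegral _ _).trans (lintegral_mono fun y => ?_)
  have hvx : v x = 0 := eqOn_zero_of_forall_le_dist_support hM hv hx
  rw [← ENNReal.ofReal_mul (by positivity), hvx, zero_sub, neg_sq]
  refine ENNReal.ofReal_le_ofReal ?_
  by_cases hvy : v y = 0
  · simp [hvy]
  · have hdist : M ≤ ‖x - y‖ := (hv x hx y hvy).trans_eq (dist_eq_norm x y)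
    rw [Real.rpow_neg hM.le, inv_mul_eq_div]
    gcongr

-- At distance `t ^ (2 r / (N + 2 c))` the coupling kernel is at most `t ^ (-2 r)`.
lemma energyQ_rescale_le_of_le_dist (r s : ℝ) {c : ℝ} (hc : 0 < N + 2 * c) (αs αr αc : ℝ)
    {Ωs : Set 𝔼} (Ωr : Set 𝔼) (φ : 𝔼 → ℝ) (a : 𝔼) {t : ℝ} (ht : 0 < t)
    (hdist : ∀ x ∈ Ωs, ∀ y ∈ Function.support (rescale a t φ),
      t ^ (2 * r / (N + 2 * c)) ≤ dist x y) :
    energyQ r s c αs αr αc Ωs Ωr (rescale a t φ) ≤ ENNReal.ofReal (t ^ (N - 2 * r)) *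
      (ENNReal.ofReal (αr / 4) * gagliardoSq r Set.univ φ +
        ENNReal.ofReal (αc / 2) * (eLpNorm φ 2 volume ^ 2 * volume Ωs)) := by
  have hM : 0 < t ^ (2 * r / (N + 2 * c)) := by positivity
  have hnear : gagliardoSq s Ωs (rescale a t φ) = 0 :=
    gagliardoSq_eq_zero_of_eqOn_const s (eqOn_zero_of_forall_le_dist_support hM hdist)
  have hfar : gagliardoSq r Ωr (rescale a t φ) ≤
      ENNReal.ofReal (t ^ (N - 2 * r)) * gagliardoSq r Set.univ φ :=
    (gagliardoSq_mono r (Set.subset_univ Ωr) _).trans_eq (gagliardoSq_univ_rescale r φ a ht)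
  have hcross : crossTerm c Ωs Ωr (rescale a t φ) ≤
      ENNReal.ofReal (t ^ (N - 2 * r)) * (eLpNorm φ 2 volume ^ 2 * volume Ωs) := by
    have hpow : (t ^ (2 * r / (N + 2 * c))) ^ (-(N + 2 * c)) * (t ^ ((N : ℝ) / 2)) ^ 2 =
        t ^ (N - 2 * r) := by
      rw [← Real.rpow_natCast (t ^ _), ← Real.rpow_mul ht.le, ← Real.rpow_mul ht.le,
        ← Real.rpow_add ht]
      congr 1
      push_cast
      field_simp
      ring
    refine (crossTerm_le_of_le_dist hc.le Ωr hM hdist).trans_eq ?_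
    rw [eLpNorm_rescale volume φ 2 a ht, finrank_euclideanSpace_fin, ENNReal.toReal_ofNat, mul_pow,
      ← ENNReal.ofReal_pow (by positivity), ← mul_assoc, ← ENNReal.ofReal_mul (by positivity),
      hpow, mul_assoc]
  rw [energyQ, hnear, mul_zero, zero_add, mul_add, mul_left_comm,
    mul_left_comm (ENNReal.ofReal (t ^ _))]
  gcongr

lemma exists_energyQ_rescale_le (hN : 1 ≤ N) {r c : ℝ} (hr : r ∈ Set.Ioo (0 : ℝ) 1) (s : ℝ)
    (hc : 0 < N + 2 * c) (αs αr αc : ℝ) {Ωs : Set 𝔼} (hΩs : Bornology.IsBounded Ωs) (Ωr : Set 𝔼)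
    {φ : 𝔼 → ℝ} {L : ℝ≥0} (hL : LipschitzWith L φ) (hφ : HasCompactSupport φ) :
    ∃ K : ℝ≥0∞, K ≠ ∞ ∧ ∀ t : ℝ, 0 < t → ∃ a : 𝔼,
      energyQ r s c αs αr αc Ωs Ωr (rescale a t φ) ≤ ENNReal.ofReal (t ^ (N - 2 * r)) * K := by
  have : Nonempty (Fin N) := ⟨⟨0, hN⟩⟩
  have hfar : gagliardoSq r Set.univ φ ≠ ∞ := (gagliardoSq_lt_top hr Set.univ hL hφ).ne
  have hL2 : eLpNorm φ 2 volume ≠ ∞ :=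
    (hL.continuous.memLp_of_hasCompactSupport hφ).eLpNorm_ne_top
  have hvol : volume Ωs ≠ ∞ := hΩs.measure_lt_top.ne
  refine ⟨ENNReal.ofReal (αr / 4) * gagliardoSq r Set.univ φ +
    ENNReal.ofReal (αc / 2) * (eLpNorm φ 2 volume ^ 2 * volume Ωs), by finiteness, fun t ht => ?_⟩
  obtain ⟨a, ha⟩ := exists_forall_le_dist_support_rescale hφ hΩs (t ^ (2 * r / (N + 2 * c))) ht
  exact ⟨a, energyQ_rescale_le_of_le_dist r s hc αs αr αc Ωr φ a ht ha⟩

end Energy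

theorem nash_exponent_lower_bound_general (N : ℕ) (hN : 1 ≤ N) (r s c : ℝ)
    (hr : r ∈ Set.Ioo (0 : ℝ) 1) (hc : 0 < N + 2 * c) (αs αr αc : ℝ≥0)
    (Ωs Ωr : Set (EuclideanSpace ℝ (Fin N))) (hΩs : Bornology.IsBounded Ωs)
    (α k : ℝ) (hk : 0 < k) (C : ℝ≥0)
    (hineq : ∀ v : EuclideanSpace ℝ (Fin N) → ℝ, ContDiff ℝ (⊤ : ℕ∞) v → HasCompactSupport v →
      eLpNorm v 2 volume ≤ ENNReal.ofReal k * eLpNorm v 1 volume →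
      eLpNorm v 2 volume ^ (2 + 4 * α / (N : ℝ)) ≤
        C * eLpNorm v 1 volume ^ (4 * α / (N : ℝ)) *
          energyQ r s c αs αr αc Ωs Ωr v) :
    r ≤ α := by
  have hN' : (0 : ℝ) < N := by exact_mod_cast hN
  let φ : ContDiffBump (0 : EuclideanSpace ℝ (Fin N)) := default
  have hφ : ContDiff ℝ (⊤ : ℕ∞) φ := φ.contDiff
  obtain ⟨L, hL⟩ := hφ.lipschitzWith_of_hasCompactSupport φ.hasCompactSupport (by simp)
  obtain ⟨K, hK, hQ⟩ :=
    exists_energyQ_rescale_le hN hr s hc αs αr αc hΩs Ωr hL φ.hasCompactSupport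
  have hfin (p : ℝ≥0∞) : eLpNorm φ p volume ≠ ∞ :=
    (φ.continuous.memLp_of_hasCompactSupport φ.hasCompactSupport).eLpNorm_ne_top
  have hpos {p : ℝ≥0∞} (hp : p ≠ 0) : eLpNorm φ p volume ≠ 0 := fun h => by
    rw [eLpNorm_eq_zero_iff φ.continuous.aestronglyMeasurable hp,
      φ.continuous.ae_eq_iff_eq volume continuous_zero] at h
    exact (φ.pos_of_mem_ball (Metric.mem_ball_self φ.rOut_pos)).ne' (congrFun h 0)
  have hscale (p : ℝ≥0∞) (a : EuclideanSpace ℝ (Fin N)) {t : ℝ} (ht : 0 < t) :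
      eLpNorm (rescale a t φ) p volume =
        ENNReal.ofReal (t ^ (N / p.toReal)) * eLpNorm φ p volume := by
    rw [eLpNorm_rescale volume φ p a ht, finrank_euclideanSpace_fin]
  by_contra! hlt
  obtain ⟨t, ht, hconstraint, hgap⟩ := exists_scaled_nash_lt hN' hlt
    (hpos two_ne_zero) (hfin 2) (hpos one_ne_zero) (hfin 1) (ENNReal.ofReal_pos.2 hk).ne'
    (ENNReal.coe_ne_top (r := C)) hK
  obtain ⟨a, ha⟩ := hQ t ht
  have h := hineq (rescale a t φ) (contDiff_rescale hφ a t)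
    (hasCompactSupport_rescale φ.hasCompactSupport a ht.ne')
  simp only [hscale _ a ht, ENNReal.toReal_one, ENNReal.toReal_ofNat, div_one] at h
  exact ((h hconstraint).trans (by gcongr)).not_gt hgap

/-- Any exponent `α` for which the normalized Nash-type inequality with the coupled energy
holds must satisfy `α ≥ r`. -/
theorem nash_exponent_lower_bound (N : ℕ) (hN : 1 ≤ N) (r s c : ℝ)
    (hr : r ∈ Set.Ioo (0 : ℝ) 1) (hs : s ∈ Set.Ioo (0 : ℝ) 1) (hc : c ∈ Set.Ioo (0 : ℝ) 1)
    (αs αr αc : ℝ) (hαs : 0 < αs) (hαr : 0 < αr) (hαc : 0 < αc)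
    (Ωs Ωr : Set (EuclideanSpace ℝ (Fin N))) (hnes : Ωs.Nonempty)
    (hΩs : IsOpen Ωs) (hbdd : Bornology.IsBounded Ωs) (hΩr : Ωr = (closure Ωs)ᶜ)
    (α : ℝ) (hα : 0 < α) (k : ℝ) (hk : 0 < k) (C : ℝ) (hC : 0 < C)
    (hineq : ∀ v : EuclideanSpace ℝ (Fin N) → ℝ, ContDiff ℝ (⊤ : ℕ∞) v → HasCompactSupport v →
      eLpNorm v 2 volume ≤ ENNReal.ofReal k * eLpNorm v 1 volume →
      eLpNorm v 2 volume ^ (2 + 4 * α / (N : ℝ)) ≤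
        ENNReal.ofReal C * eLpNorm v 1 volume ^ (4 * α / (N : ℝ)) *
          energyQ r s c αs αr αc Ωs Ωr v) :
    r ≤ α := by
  have hc' : 0 < N + 2 * c := by linarith [hc.1, Nat.cast_nonneg (α := ℝ) N]
  exact nash_exponent_lower_bound_general N hN r s c hr hc' ⟨αs, hαs.le⟩ ⟨αr, hαr.le⟩
    ⟨αc, hαc.le⟩ Ωs Ωr hbdd α k hk C.toNNReal hineq
end

section
/- Let N ≥ 1, r, s, c ∈ (0,1), α_s, α_r, α_c > 0, and let ρ > 0 and λ > 0 with 1/λ < ρ/2. Let φ : ℝ^N → ℝ be twice continuously differentiable with φ and D²φ bounded, and suppose φ(x) = φ(0) for all |x| < ρ. Then there exists a constant C > 0 (depending only on N, r, s, c, α_s, α_r, α_c) such that the operator L_λ applied to φ satisfies: (i) |(L_λ φ)(x)| ≤ C λ^{2r−2c} ρ^{−2c} ‖φ‖_∞ for |x| < 1/λ; (ii) |(L_λ φ)(x)| ≤ C ( ρ^{2−2r} ‖D²φ‖_∞ + ρ^{−2r} ‖φ‖_∞ ) for 1/λ < |x| < ρ; (iii) |(L_λ φ)(x)| ≤ C (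 ρ^{2−2r} ‖D²φ‖_∞ + (ρ^{−2r} + λ^{2r−2c−N} ρ^{−N−2c}) ‖φ‖_∞ ) for |x| > ρ. -/
open MeasureTheory ENNReal Filter

/-- The kernel of the rescaled coupled operator `L_λ`: the diffusion exponent depends on
which of the two regions `{|·| < 1/λ}`, `{|·| > 1/λ}` the points `x` and `y` belong to. -/
noncomputable def rescaledKernel (N : ℕ) (r s c αs αr αc lam : ℝ)
    (x y : EuclideanSpace ℝ (Fin N)) : ℝ :=
  if ‖x‖ < 1 / lam then
    (if ‖y‖ < 1 / lam then αs * lam ^ (2 * r - 2 * s) / ‖x - y‖ ^ ((N : ℝ) + 2 * s)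
     else αc * lam ^ (2 * r - 2 * c) / ‖x - y‖ ^ ((N : ℝ) + 2 * c))
  else
    (if ‖y‖ < 1 / lam then αc * lam ^ (2 * r - 2 * c) / ‖x - y‖ ^ ((N : ℝ) + 2 * c)
     else αr / ‖x - y‖ ^ ((N : ℝ) + 2 * r))

/-- `ℓ` is the Cauchy principal value at `x` of the integral of `g` over `ℝ^N`. -/
def IsPVIntegral {N : ℕ} (g : EuclideanSpace ℝ (Fin N) → ℝ) (x : EuclideanSpace ℝ (Fin N))
    (ℓ : ℝ) : Prop :=
  Tendsto (fun ε : ℝ => ∫ y in {y : EuclideanSpace ℝ (Fin N) | ε < ‖y - x‖}, g y)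
    (nhdsWithin 0 (Set.Ioi 0)) (nhds ℓ)

/-!
Subtracting an odd function does not change a principal value, so near the pole `x` the singular
integrand `(φ (x + z) - φ x) * |z|^(-N-2r)` may be replaced by the one with the Taylor remainder,
which is at most `‖D²φ‖_∞ |z|^(2-N-2r)`; away from the pole, `|φ y - φ x| ≤ 2 ‖φ‖_∞`. Splitting at
`|z| = ρ / 2` gives the `ρ^(2-2r) ‖D²φ‖_∞` and `ρ^(-2r) ‖φ‖_∞` terms.

The plateau `{|x| < ρ}` makes the change of kernel at `|y| = 1/λ` harmless: as `1/λ < ρ/2`, any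
`y` with `|y| < 1/λ` and `|x - y| < ρ/2` forces `|x| < ρ`, hence `φ y = φ x`. In particular the
kernel of order `s` never contributes, and for `|x| < 1/λ` only the tail `|z| ≥ ρ/2` of the kernel
of order `c` does. What remains of the ball `{|y| < 1/λ}`, when `|x| > ρ`, is a region of volume at
most `ω_N λ^(-N)` on which the kernel is at most `|α_c| λ^(2r-2c) (ρ/2)^(-N-2c)`.
-/

open Set Metric Module
open scoped NNReal

section RadialIntegrals

variable {E : Type*} [NormedAddCommGroup E] [NormedSpace ℝ E] [FiniteDimensional ℝ E]
  [Nontrivial E] [MeasurableSpace E] [BorelSpace E] (μ : Measure E) [μ.IsAddHaarMeasure]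
  {F : Type*} [NormedAddCommGroup F] [NormedSpace ℝ F]

lemma integrableOn_fun_norm_preimage_iff {S : Set ℝ} (hS : MeasurableSet S) (f : ℝ → F) :
    IntegrableOn (fun x : E => f ‖x‖) (norm ⁻¹' S) μ ↔
      IntegrableOn (fun t => t ^ (finrank ℝ E - 1) • f t) (Ioi 0 ∩ S) := by
  rw [← integrable_indicator_iff (measurable_norm hS), inter_comm, ← integrableOn_indicator_iff hS,
    indicator_smul]
  exact integrable_fun_norm_addHaar μ (f := S.indicator f)

lemma setIntegral_fun_norm_preimage {S : Set ℝ} (hS : MeasurableSet S) (f : ℝ → F) :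
    ∫ x in norm ⁻¹' S, f ‖x‖ ∂μ = finrank ℝ E • μ.real (ball 0 1) •
      ∫ t in Ioi 0 ∩ S, t ^ (finrank ℝ E - 1) • f t := by
  rw [← integral_indicator (measurable_norm hS), ← setIntegral_indicator hS, indicator_smul]
  exact integral_fun_norm_addHaar μ (S.indicator f)

lemma pow_pred_mul_rpow_sub {d : ℕ} (hd : 0 < d) (a : ℝ) {t : ℝ} (ht : 0 < t) :
    t ^ (d - 1) * t ^ (a - d) = t ^ (a - 1) := by
  rw [← Real.rpow_natCast, ← Real.rpow_add ht, Nat.cast_pred hd]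
  ring_nf

lemma integrableOn_ball_norm_rpow {a : ℝ} (ha : 0 < a) (R : ℝ) :
    IntegrableOn (fun x : E => ‖x‖ ^ (a - finrank ℝ E)) (ball 0 R) μ := by
  have hmeas : Measurable fun x : E => ‖x‖ ^ (a - finrank ℝ E) := by fun_prop
  refine integrableOn_ball_of_norm_le_rpow (C := 1) (α := finrank ℝ E - a) finrank_pos
    (by linarith) (.of_forall fun x => ?_) hmeas.aestronglyMeasurable
  rw [neg_sub, one_mul, Real.norm_of_nonneg (by positivity)]

lemma setIntegral_ball_norm_rpow {a R : ℝ} (ha : 0 < a) (hR : 0 ≤ R) :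
    ∫ x in ball (0 : E) R, ‖x‖ ^ (a - finrank ℝ E) ∂μ =
      finrank ℝ E * μ.real (ball 0 1) * (R ^ a / a) := by
  have hball : ball (0 : E) R = norm ⁻¹' Iio R := by ext; simp
  have hradial : ∫ t in Ioi 0 ∩ Iio R, t ^ (finrank ℝ E - 1) • t ^ (a - finrank ℝ E) = R ^ a / a :=
    calc ∫ t in Ioi 0 ∩ Iio R, t ^ (finrank ℝ E - 1) • t ^ (a - finrank ℝ E)
      _ = ∫ t in Ioo 0 R, t ^ (a - 1) := setIntegral_congr_fun measurableSet_Ioo fun t ht =>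
        pow_pred_mul_rpow_sub finrank_pos a ht.1
      _ = ∫ t in 0..R, t ^ (a - 1) := by
        rw [← integral_Ioc_eq_integral_Ioo, intervalIntegral.integral_of_le hR]
      _ = R ^ a / a := by
        rw [integral_rpow (.inl (by linarith)), sub_add_cancel, Real.zero_rpow ha.ne', sub_zero]
  rw [hball, setIntegral_fun_norm_preimage μ measurableSet_Iio fun t => t ^ (a - finrank ℝ E),
    hradial, nsmul_eq_mul, smul_eq_mul, mul_assoc]

lemma integrableOn_compl_ball_norm_rpow {b R : ℝ} (hb : 0 < b) (hR : 0 < R) :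
    IntegrableOn (fun x : E => ‖x‖ ^ (-b - finrank ℝ E)) (ball 0 R)ᶜ μ := by
  have hball : (ball (0 : E) R)ᶜ = norm ⁻¹' Ici R := by ext; simp
  rw [hball, integrableOn_fun_norm_preimage_iff μ measurableSet_Ici fun t => t ^ (-b - finrank ℝ E),
    inter_eq_right.2 (Ici_subset_Ioi.2 hR)]
  have hpow : IntegrableOn (fun t : ℝ => t ^ (-b - 1)) (Ici R) := by
    rw [integrableOn_Ici_iff_integrableOn_Ioi]
    exact integrableOn_Ioi_rpow_of_lt (by linarith) hR
  exact hpow.congr_fun (fun t ht => (pow_pred_mul_rpow_sub finrank_pos (-b) (hR.trans_le ht)).symm)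
    measurableSet_Ici

lemma setIntegral_compl_ball_norm_rpow {b R : ℝ} (hb : 0 < b) (hR : 0 < R) :
    ∫ x in (ball (0 : E) R)ᶜ, ‖x‖ ^ (-b - finrank ℝ E) ∂μ =
      finrank ℝ E * μ.real (ball 0 1) * (R ^ (-b) / b) := by
  have hball : (ball (0 : E) R)ᶜ = norm ⁻¹' Ici R := by ext; simp
  have hradial :
      ∫ t in Ioi 0 ∩ Ici R, t ^ (finrank ℝ E - 1) • t ^ (-b - finrank ℝ E) = R ^ (-b) / b :=
    calc ∫ t in Ioi 0 ∩ Ici R, t ^ (finrank ℝ E - 1) • t ^ (-b - finrank ℝ E)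
      _ = ∫ t in Ici R, t ^ (-b - 1) := by
        rw [inter_eq_right.2 (Ici_subset_Ioi.2 hR)]
        exact setIntegral_congr_fun measurableSet_Ici fun t ht =>
          pow_pred_mul_rpow_sub finrank_pos (-b) (hR.trans_le ht)
      _ = R ^ (-b) / b := by
        rw [integral_Ici_eq_integral_Ioi, integral_Ioi_rpow_of_lt (by linarith) hR, sub_add_cancel,
          neg_div_neg_eq]
  rw [hball, setIntegral_fun_norm_preimage μ measurableSet_Ici fun t => t ^ (-b - finrank ℝ E),
    hradial, nsmul_eq_mul, smul_eq_mul, mul_assoc]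

lemma integrable_piecewise_ball_norm_rpow {a b R : ℝ} (ha : 0 < a) (hb : 0 < b)
    (hR : 0 < R) (A B : ℝ) [DecidablePred (· ∈ ball (0 : E) R)] :
    Integrable ((ball (0 : E) R).piecewise (fun x => A * ‖x‖ ^ (a - finrank ℝ E))
      fun x => B * ‖x‖ ^ (-b - finrank ℝ E)) μ :=
  .piecewise measurableSet_ball ((integrableOn_ball_norm_rpow μ ha R).const_mul A)
    ((integrableOn_compl_ball_norm_rpow μ hb hR).const_mul B)

lemma integral_piecewise_ball_norm_rpow {a b R : ℝ} (ha : 0 < a) (hb : 0 < b)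
    (hR : 0 < R) (A B : ℝ) [DecidablePred (· ∈ ball (0 : E) R)] :
    ∫ x, (ball (0 : E) R).piecewise (fun x => A * ‖x‖ ^ (a - finrank ℝ E))
      (fun x => B * ‖x‖ ^ (-b - finrank ℝ E)) x ∂μ =
    finrank ℝ E * μ.real (ball 0 1) * (A * (R ^ a / a) + B * (R ^ (-b) / b)) := by
  rw [integral_piecewise measurableSet_ball ((integrableOn_ball_norm_rpow μ ha R).const_mul A)
      ((integrableOn_compl_ball_norm_rpow μ hb hR).const_mul B), integral_const_mul,
    integral_const_mul, setIntegral_ball_norm_rpow μ ha hR.le,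
    setIntegral_compl_ball_norm_rpow μ hb hR]
  ring

end RadialIntegrals

section DerivativeEstimates

variable {E F : Type*} [NormedAddCommGroup E] [NormedSpace ℝ E] [NormedAddCommGroup F]
  [NormedSpace ℝ F] {f : E → F} {K : ℝ≥0}

lemma lipschitzWith_fderiv_of_norm_iteratedFDeriv_two_le (hf : ContDiff ℝ 2 f)
    (hK : ∀ x, ‖iteratedFDeriv ℝ 2 f x‖ ≤ K) : LipschitzWith K (fderiv ℝ f) := by
  have hdiff : Differentiable ℝ (fderiv ℝ f) :=
    (hf.fderiv_right (m := 1) (by norm_num)).differentiable one_ne_zero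
  refine lipschitzWith_of_nnnorm_fderiv_le hdiff fun x => ?_
  rw [← NNReal.coe_le_coe, coe_nnnorm, ← norm_iteratedFDeriv_one, norm_iteratedFDeriv_fderiv]
  exact hK x

lemma norm_add_sub_sub_fderiv_le (hf : Differentiable ℝ f) (hK : LipschitzWith K (fderiv ℝ f))
    (x z : E) : ‖f (x + z) - f x - fderiv ℝ f x z‖ ≤ K * ‖z‖ ^ 2 := by
  have hbound : ∀ y ∈ closedBall x ‖z‖, ‖fderiv ℝ f y - fderiv ℝ f x‖ ≤ K * ‖z‖ := fun y hy =>
    (hK.norm_sub_le y x).trans (by gcongr; exact mem_closedBall_iff_norm.1 hy)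
  have htaylor := (convex_closedBall x ‖z‖).norm_image_sub_le_of_norm_fderiv_le'
    (fun y _ => hf y) hbound (mem_closedBall_self (norm_nonneg z))
    (show x + z ∈ closedBall x ‖z‖ by simp)
  rwa [add_sub_cancel_left, mul_assoc, ← sq] at htaylor

lemma fderiv_eq_zero_of_norm_lt {ρ : ℝ} {x : E} (hf : ∀ x, ‖x‖ < ρ → f x = f 0) (hx : ‖x‖ < ρ) :
    fderiv ℝ f x = 0 := by
  have hlocal : f =ᶠ[nhds x] fun _ => f 0 := by
    filter_upwards [isOpen_ball.mem_nhds (mem_ball_zero_iff.2 hx)] with y hy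
    exact hf y (mem_ball_zero_iff.1 hy)
  rw [hlocal.fderiv_eq, fderiv_const_apply]

end DerivativeEstimates

section PrincipalValue

/-- `ω_N`, the Lebesgue measure of the unit ball of `ℝ^N`. -/
noncomputable def unitBallVolume (N : ℕ) : ℝ :=
  volume.real (ball (0 : EuclideanSpace ℝ (Fin N)) 1)

lemma unitBallVolume_nonneg (N : ℕ) : 0 ≤ unitBallVolume N := measureReal_nonneg

lemma volume_real_ball {N : ℕ} (x : EuclideanSpace ℝ (Fin N)) {R : ℝ} (hR : 0 < R) :
    volume.real (ball x R) = R ^ N * unitBallVolume N := by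
  rw [Measure.real, Measure.addHaar_ball_of_pos volume x hR, toReal_mul,
    toReal_ofReal (by positivity), finrank_euclideanSpace_fin, unitBallVolume, Measure.real]

lemma integrableOn_norm_gt_indicator_ball {E F : Type*} [NormedAddCommGroup E] [ProperSpace E]
    [MeasurableSpace E] [OpensMeasurableSpace E] {μ : Measure E} [IsFiniteMeasureOnCompacts μ]
    [NormedAddCommGroup F] {g : E → F} (hg : ContinuousOn g {0}ᶜ) (R : ℝ) {ε : ℝ} (hε : 0 < ε) :
    IntegrableOn ((ball 0 R).indicator g) {z | ε < ‖z‖} μ := by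
  rw [integrableOn_indicator_iff measurableSet_ball]
  have hcompact : IsCompact (closedBall (0 : E) R \ ball 0 ε) :=
    (isCompact_closedBall 0 R).diff isOpen_ball
  refine ((hg.mono ?_).integrableOn_compact hcompact).mono_set ?_
  · rintro z ⟨-, hz⟩ rfl
    exact hz (mem_ball_self hε)
  · rintro z ⟨hzR, hzε⟩
    exact ⟨ball_subset_closedBall hzR, fun hz => lt_asymm hzε (mem_ball_zero_iff.1 hz)⟩

lemma setIntegral_eq_zero_of_odd {G F : Type*} [MeasurableSpace G] [AddGroup G] [MeasurableNeg G]
    [NormedAddCommGroup F] [NormedSpace ℝ F] {μ : Measure G} [μ.IsNegInvariant]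
    {f : G → F} (hf : f.Odd) {S : Set G} (hS : Neg.neg ⁻¹' S = S) : ∫ x in S, f x ∂μ = 0 := by
  have := IsAddTorsionFree.of_isTorsionFree ℝ F
  have hneg : ∫ x in S, f x ∂μ = -∫ x in S, f x ∂μ := by
    conv_lhs => rw [← (Measure.measurePreserving_neg μ).setIntegral_preimage_emb
      (MeasurableEquiv.neg G).measurableEmbedding, hS]
    simp only [hf.eq, integral_neg]
  exact self_eq_neg.1 hneg

variable {N : ℕ} {F g : EuclideanSpace ℝ (Fin N) → ℝ} {x : EuclideanSpace ℝ (Fin N)} {ℓ : ℝ}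

lemma IsPVIntegral.translate (h : IsPVIntegral F x ℓ) : IsPVIntegral (fun z => F (x + z)) 0 ℓ := by
  refine h.congr fun ε => ?_
  rw [← (measurePreserving_add_left volume x).setIntegral_preimage_emb
    (measurableEmbedding_addLeft x)]
  simp

lemma IsPVIntegral.sub_of_odd (h : IsPVIntegral F 0 ℓ) (hodd : g.Odd)
    (hg : ∀ ε > 0, IntegrableOn g {z | ε < ‖z‖}) : IsPVIntegral (F - g) 0 ℓ := by
  refine h.congr' ?_
  filter_upwards [self_mem_nhdsWithin] with ε hε
  simp only [sub_zero]
  have hg0 : ∫ z in {z | ε < ‖z‖}, g z = 0 := setIntegral_eq_zero_of_odd hodd (by ext; simp)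
  by_cases hF : IntegrableOn F {z | ε < ‖z‖}
  · rw [integral_sub' hF (hg ε hε), hg0, sub_zero]
  · rw [integral_undef hF, integral_undef fun hFg => hF ?_]
    exact (hFg.add (hg ε hε)).congr (.of_forall fun z => sub_add_cancel _ _)

lemma IsPVIntegral.abs_le_integral (h : IsPVIntegral F x ℓ) {G : EuclideanSpace ℝ (Fin N) → ℝ}
    (hG : Integrable G) (hFG : ∀ᵐ y, |F y| ≤ G y) : |ℓ| ≤ ∫ y, G y := by
  refine le_of_tendsto h.abs (.of_forall fun ε => ?_)
  calc |∫ y in {y | ε < ‖y - x‖}, F y|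
    _ ≤ ∫ y in {y | ε < ‖y - x‖}, G y :=
      norm_integral_le_of_norm_le (f := F) hG.integrableOn (ae_restrict_of_ae hFG)
    _ ≤ ∫ y, G y := setIntegral_le_integral hG (hFG.mono fun _ => (abs_nonneg _).trans)

lemma IsPVIntegral.abs_le_of_near_far [NeZero N] (h : IsPVIntegral F x ℓ) (hodd : g.Odd)
    (hg : ContinuousOn g {0}ᶜ) {R a b A B D : ℝ} (hR : 0 < R) (ha : 0 < a) (hb : 0 < b)
    (hD : 0 ≤ D) {S : Set (EuclideanSpace ℝ (Fin N))} (hS : MeasurableSet S)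
    (hS_fin : volume S ≠ ∞)
    (hnear : ∀ z ≠ 0, ‖z‖ < R → |F (x + z) - g z| ≤ A * ‖z‖ ^ (a - N))
    (hfar : ∀ z, R ≤ ‖z‖ → |F (x + z)| ≤ B * ‖z‖ ^ (-b - N) + S.indicator (fun _ => D) z) :
    |ℓ| ≤ N * unitBallVolume N * (A * (R ^ a / a) + B * (R ^ (-b) / b)) + D * volume.real S := by
  classical
  set G : EuclideanSpace ℝ (Fin N) → ℝ :=
    (ball 0 R).piecewise (fun z => A * ‖z‖ ^ (a - N)) fun z => B * ‖z‖ ^ (-b - N) with hG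
  set H : EuclideanSpace ℝ (Fin N) → ℝ := S.indicator fun _ => D
  have hG_int : Integrable G := by
    simpa only [finrank_euclideanSpace_fin] using integrable_piecewise_ball_norm_rpow
      (E := EuclideanSpace ℝ (Fin N)) volume ha hb hR A B
  have hH_int : Integrable H := (integrable_indicator_iff hS).2 (integrableOn_const hS_fin)
  have hintegral : ∫ z, (G + H) z =
      N * unitBallVolume N * (A * (R ^ a / a) + B * (R ^ (-b) / b)) + D * volume.real S := by
    have hG_val := integral_piecewise_ball_norm_rpow
      (E := EuclideanSpace ℝ (Fin N)) volume ha hb hR A B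
    rw [finrank_euclideanSpace_fin] at hG_val
    rw [integral_add' hG_int hH_int, hG_val, integral_indicator_const _ hS, smul_eq_mul, mul_comm D,
      unitBallVolume]
  have hodd_trunc : ((ball 0 R).indicator g).Odd := fun z => by
    by_cases hz : ‖z‖ < R <;> simp [hz, hodd.eq]
  have hpv := h.translate.sub_of_odd hodd_trunc fun ε => integrableOn_norm_gt_indicator_ball hg R
  rw [← hintegral]
  refine hpv.abs_le_integral (hG_int.add hH_int) ?_
  filter_upwards [Measure.ae_ne volume 0] with z hz
  have hHz : 0 ≤ H z := indicator_nonneg (fun _ _ => hD) z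
  by_cases hzR : ‖z‖ < R
  · simpa [hG, hzR] using (hnear z hz hzR).trans (le_add_of_nonneg_right hHz)
  · simpa [hG, hzR] using hfar z (not_lt.1 hzR)

end PrincipalValue

section RescaledOperator

variable {N : ℕ} {r s c αs αr αc lam ρ M : ℝ} {M₂ : ℝ≥0} {φ : EuclideanSpace ℝ (Fin N) → ℝ}
  {x y z : EuclideanSpace ℝ (Fin N)} {ℓ : ℝ}

/-- The integrand whose principal value integral over `y` at `x` is `(L_λ φ)(x)`. -/
noncomputable def rescaledIntegrand (N : ℕ) (r s c αs αr αc lam : ℝ)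
    (φ : EuclideanSpace ℝ (Fin N) → ℝ) (x y : EuclideanSpace ℝ (Fin N)) : ℝ :=
  (φ y - φ x) * rescaledKernel N r s c αs αr αc lam x y

lemma div_norm_sub_add_rpow (k q : ℝ) (x z : EuclideanSpace ℝ (Fin N)) :
    k / ‖x - (x + z)‖ ^ ((N : ℝ) + q) = k * ‖z‖ ^ (-q - N) := by
  rw [sub_add_cancel_left, norm_neg, div_eq_mul_inv, ← Real.rpow_neg (norm_nonneg z), neg_add_rev,
    sub_eq_add_neg]

lemma rescaledKernel_of_interior_of_exterior (hx : ‖x‖ < 1 / lam) (hxz : 1 / lam ≤ ‖x + z‖) :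
    rescaledKernel N r s c αs αr αc lam x (x + z) =
      αc * lam ^ (2 * r - 2 * c) * ‖z‖ ^ (-(2 * c) - N) := by
  rw [rescaledKernel, if_pos hx, if_neg hxz.not_gt, div_norm_sub_add_rpow]

lemma rescaledKernel_of_exterior_of_interior (hx : 1 / lam ≤ ‖x‖) (hxz : ‖x + z‖ < 1 / lam) :
    rescaledKernel N r s c αs αr αc lam x (x + z) =
      αc * lam ^ (2 * r - 2 * c) * ‖z‖ ^ (-(2 * c) - N) := by
  rw [rescaledKernel, if_neg hx.not_gt, if_pos hxz, div_norm_sub_add_rpow]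

lemma rescaledKernel_of_exterior_of_exterior (hx : 1 / lam ≤ ‖x‖) (hxz : 1 / lam ≤ ‖x + z‖) :
    rescaledKernel N r s c αs αr αc lam x (x + z) = αr * ‖z‖ ^ (-(2 * r) - N) := by
  rw [rescaledKernel, if_neg hx.not_gt, if_neg hxz.not_gt, div_norm_sub_add_rpow]

lemma rescaledIntegrand_eq_zero (hφ_const : ∀ x, ‖x‖ < ρ → φ x = φ 0) (hx : ‖x‖ < ρ)
    (hy : ‖y‖ < ρ) : rescaledIntegrand N r s c αs αr αc lam φ x y = 0 := by
  rw [rescaledIntegrand, hφ_const y hy, hφ_const x hx, sub_self, zero_mul]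

lemma abs_rescaledIntegrand_le (hM : ∀ x, |φ x| ≤ M) {k q : ℝ}
    (hkernel : rescaledKernel N r s c αs αr αc lam x (x + z) = k * ‖z‖ ^ q) :
    |rescaledIntegrand N r s c αs αr αc lam φ x (x + z)| ≤ 2 * |k| * M * ‖z‖ ^ q :=
  calc |rescaledIntegrand N r s c αs αr αc lam φ x (x + z)|
    _ = |φ (x + z) - φ x| * (|k| * ‖z‖ ^ q) := by
      rw [rescaledIntegrand, hkernel, abs_mul, abs_mul,
        abs_of_nonneg (Real.rpow_nonneg (norm_nonneg z) q)]
    _ ≤ (M + M) * (|k| * ‖z‖ ^ q) := by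
      gcongr
      exact (abs_sub _ _).trans (add_le_add (hM _) (hM _))
    _ = 2 * |k| * M * ‖z‖ ^ q := by ring

lemma abs_rescaledIntegrand_sub_fderiv_le (hφ : Differentiable ℝ φ)
    (hM₂ : LipschitzWith M₂ (fderiv ℝ φ)) (hφ_const : ∀ x, ‖x‖ < ρ → φ x = φ 0)
    (hlamρ : 1 / lam < ρ / 2) (hx : 1 / lam ≤ ‖x‖) (hz : z ≠ 0) (hzρ : ‖z‖ < ρ / 2) :
    |rescaledIntegrand N r s c αs αr αc lam φ x (x + z) -
        fderiv ℝ φ x z * (αr * ‖z‖ ^ (-(2 * r) - N))| ≤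
      |αr| * M₂ * ‖z‖ ^ (2 - 2 * r - N) := by
  rcases lt_or_ge ‖x + z‖ (1 / lam) with hxz | hxz
  · have hxρ : ‖x‖ < ρ := by linarith [norm_le_add_norm_add x z]
    rw [rescaledIntegrand_eq_zero hφ_const hxρ (by linarith [norm_nonneg z]),
      fderiv_eq_zero_of_norm_lt hφ_const hxρ, zero_apply, zero_mul, sub_zero, abs_zero]
    positivity
  · have hpow : ‖z‖ ^ 2 * ‖z‖ ^ (-(2 * r) - N) = ‖z‖ ^ (2 - 2 * r - N) := by
      rw [← Real.rpow_natCast, ← Real.rpow_add (norm_pos_iff.2 hz)]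
      push_cast
      ring_nf
    calc |rescaledIntegrand N r s c αs αr αc lam φ x (x + z) -
          fderiv ℝ φ x z * (αr * ‖z‖ ^ (-(2 * r) - N))|
      _ = |φ (x + z) - φ x - fderiv ℝ φ x z| * (|αr| * ‖z‖ ^ (-(2 * r) - N)) := by
        rw [rescaledIntegrand, rescaledKernel_of_exterior_of_exterior hx hxz, ← sub_mul, abs_mul,
          abs_mul, abs_of_nonneg (Real.rpow_nonneg (norm_nonneg z) _)]
      _ ≤ M₂ * ‖z‖ ^ 2 * (|αr| * ‖z‖ ^ (-(2 * r) - N)) := by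
        gcongr
        exact norm_add_sub_sub_fderiv_le hφ hM₂ x z
      _ = |αr| * M₂ * ‖z‖ ^ (2 - 2 * r - N) := by
        rw [← hpow]
        ring

lemma abs_rescaledIntegrand_le_of_exterior_of_interior (hM : ∀ x, |φ x| ≤ M) (hc : 0 ≤ c)
    (hlam : 0 < lam) (hρ : 0 < ρ) (hx : 1 / lam ≤ ‖x‖) (hxz : ‖x + z‖ < 1 / lam)
    (hz : ρ / 2 ≤ ‖z‖) :
    |rescaledIntegrand N r s c αs αr αc lam φ x (x + z)| ≤
      2 * (|αc| * lam ^ (2 * r - 2 * c)) * M * (ρ / 2) ^ (-(2 * c) - N) := by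
  have hM_nonneg : 0 ≤ M := (abs_nonneg _).trans (hM 0)
  have hbound := abs_rescaledIntegrand_le (φ := φ) (s := s) (αs := αs) (αr := αr) hM
    (rescaledKernel_of_exterior_of_interior (r := r) (c := c) (αc := αc) hx hxz)
  rw [abs_mul, abs_of_pos (Real.rpow_pos_of_pos hlam _)] at hbound
  refine hbound.trans (mul_le_mul_of_nonneg_left ?_ (by positivity))
  exact Real.rpow_le_rpow_of_nonpos (by positivity) hz
    (by linarith [N.cast_nonneg (α := ℝ)])

lemma div_two_rpow_neg {t : ℝ} (ht : 0 ≤ t) (q : ℝ) : (t / 2) ^ (-q) = 2 ^ q * t ^ (-q) := by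
  rw [Real.div_rpow ht zero_le_two, Real.rpow_neg zero_le_two, div_inv_eq_mul, mul_comm]

/-- The constant of the bound inside `{|x| < 1/λ}`. -/
noncomputable def interiorConst (N : ℕ) (c αc : ℝ) : ℝ :=
  N * unitBallVolume N * |αc| * (2 ^ (2 * c) / c)

/-- The constant of the contribution of the kernel of order `r` outside `{|x| < 1/λ}`. -/
noncomputable def exteriorConst (N : ℕ) (r αr : ℝ) : ℝ :=
  N * unitBallVolume N * |αr| * (1 / (2 - 2 * r) + 2 ^ (2 * r) / r)

/-- The constant of the contribution of `{|y| < 1/λ}` to `L_λ` at points outside that region. -/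
noncomputable def couplingConst (N : ℕ) (c αc : ℝ) : ℝ :=
  2 * 2 ^ (2 * c + N) * |αc| * unitBallVolume N

lemma interiorConst_nonneg (N : ℕ) (hc : 0 ≤ c) (αc : ℝ) : 0 ≤ interiorConst N c αc := by
  have hω := unitBallVolume_nonneg N
  unfold interiorConst
  positivity

lemma exteriorConst_nonneg (N : ℕ) (hr : r ∈ Ioo 0 1) (αr : ℝ) : 0 ≤ exteriorConst N r αr := by
  have hω := unitBallVolume_nonneg N
  have hr_pos : 0 < r := hr.1
  have ha : 0 < 2 - 2 * r := by linarith [hr.2]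
  unfold exteriorConst
  positivity

lemma couplingConst_nonneg (N : ℕ) (c αc : ℝ) : 0 ≤ couplingConst N c αc := by
  have hω := unitBallVolume_nonneg N
  unfold couplingConst
  positivity

lemma abs_pv_rescaledIntegrand_le_of_interior [NeZero N] (hc : 0 < c) (hlam : 0 < lam)
    (hlamρ : 1 / lam < ρ / 2) (hM : ∀ x, |φ x| ≤ M) (hφ_const : ∀ x, ‖x‖ < ρ → φ x = φ 0)
    (hx : ‖x‖ < 1 / lam) (h : IsPVIntegral (rescaledIntegrand N r s c αs αr αc lam φ x) x ℓ) :
    |ℓ| ≤ interiorConst N c αc * (lam ^ (2 * r - 2 * c) * ρ ^ (-(2 * c)) * M) := by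
  have hlam_inv : 0 < 1 / lam := by positivity
  have hρ : 0 < ρ / 2 := hlam_inv.trans hlamρ
  have hnear : ∀ z, ‖z‖ < ρ / 2 → rescaledIntegrand N r s c αs αr αc lam φ x (x + z) = 0 :=
    fun z hz => rescaledIntegrand_eq_zero hφ_const (by linarith)
      (by linarith [norm_add_le x z])
  have hfar : ∀ z, |rescaledIntegrand N r s c αs αr αc lam φ x (x + z)| ≤
      2 * (|αc| * lam ^ (2 * r - 2 * c)) * M * ‖z‖ ^ (-(2 * c) - N) := fun z => by
    rcases lt_or_ge ‖x + z‖ (1 / lam) with hxz | hxz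
    · have hM_nonneg : 0 ≤ M := (abs_nonneg _).trans (hM 0)
      rw [rescaledIntegrand_eq_zero hφ_const (by linarith) (by linarith), abs_zero]
      positivity
    · refine (abs_rescaledIntegrand_le hM
        (rescaledKernel_of_interior_of_exterior hx hxz)).trans_eq ?_
      rw [abs_mul, abs_of_pos (Real.rpow_pos_of_pos hlam _)]
  have hℓ := h.abs_le_of_near_far (g := 0) (a := 1) (A := 0) (D := 0) (S := ∅) (fun _ => by simp)
    continuousOn_const hρ one_pos (mul_pos two_pos hc) le_rfl .empty (by simp)
    (fun z _ hz => by simp [hnear z hz]) (fun z _ => by simpa using hfar z)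
  refine hℓ.trans_eq ?_
  rw [div_two_rpow_neg (by linarith), interiorConst]
  field_simp
  ring

lemma radial_bound_le_exteriorConst_mul (hr : r ∈ Ioo 0 1) (hρ : 0 ≤ ρ) (hM : 0 ≤ M) :
    N * unitBallVolume N * (|αr| * M₂ * ((ρ / 2) ^ (2 - 2 * r) / (2 - 2 * r)) +
        2 * |αr| * M * ((ρ / 2) ^ (-(2 * r)) / (2 * r))) ≤
      exteriorConst N r αr * (ρ ^ (2 - 2 * r) * M₂ + ρ ^ (-(2 * r)) * M) := by
  have hr_pos : 0 < r := hr.1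
  have ha : 0 < 2 - 2 * r := by linarith [hr.2]
  have hω := unitBallVolume_nonneg N
  calc N * unitBallVolume N * (|αr| * M₂ * ((ρ / 2) ^ (2 - 2 * r) / (2 - 2 * r)) +
        2 * |αr| * M * ((ρ / 2) ^ (-(2 * r)) / (2 * r)))
    _ = N * unitBallVolume N * |αr| * (1 / (2 - 2 * r) * ((ρ / 2) ^ (2 - 2 * r) * M₂) +
        2 ^ (2 * r) / r * (ρ ^ (-(2 * r)) * M)) := by
      rw [div_two_rpow_neg hρ]
      field_simp
    _ ≤ N * unitBallVolume N * |αr| * ((1 / (2 - 2 * r) + 2 ^ (2 * r) / r) *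
        (ρ ^ (2 - 2 * r) * M₂ + ρ ^ (-(2 * r)) * M)) := by
      rw [add_mul]
      gcongr
      · have hpow : (ρ / 2) ^ (2 - 2 * r) ≤ ρ ^ (2 - 2 * r) :=
          Real.rpow_le_rpow (by positivity) (half_le_self hρ) ha.le
        exact (mul_le_mul_of_nonneg_right hpow M₂.coe_nonneg).trans
          (le_add_of_nonneg_right (by positivity))
      · exact le_add_of_nonneg_left (by positivity)
    _ = exteriorConst N r αr * (ρ ^ (2 - 2 * r) * M₂ + ρ ^ (-(2 * r)) * M) := by
      rw [exteriorConst, mul_assoc (_ * |αr|)]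

lemma abs_pv_rescaledIntegrand_le_of_coupling_le [NeZero N] (hr : r ∈ Ioo 0 1) (hlam : 0 < lam)
    (hlamρ : 1 / lam < ρ / 2) (hφ : Differentiable ℝ φ) (hM : ∀ x, |φ x| ≤ M)
    (hM₂ : LipschitzWith M₂ (fderiv ℝ φ)) (hφ_const : ∀ x, ‖x‖ < ρ → φ x = φ 0)
    (hx : 1 / lam ≤ ‖x‖) {D : ℝ} (hD : 0 ≤ D)
    (hcoupling : ∀ z, ρ / 2 ≤ ‖z‖ → ‖x + z‖ < 1 / lam →
      |rescaledIntegrand N r s c αs αr αc lam φ x (x + z)| ≤ D)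
    (h : IsPVIntegral (rescaledIntegrand N r s c αs αr αc lam φ x) x ℓ) :
    |ℓ| ≤ exteriorConst N r αr * (ρ ^ (2 - 2 * r) * M₂ + ρ ^ (-(2 * r)) * M) +
      D * ((1 / lam) ^ N * unitBallVolume N) := by
  have hρ : 0 < ρ / 2 := (one_div_pos.2 hlam).trans hlamρ
  have ha : 0 < 2 - 2 * r := by linarith [hr.2]
  have hM_nonneg : 0 ≤ M := (abs_nonneg _).trans (hM 0)
  have hodd : (fun z => fderiv ℝ φ x z * (αr * ‖z‖ ^ (-(2 * r) - N))).Odd := fun z => by simp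
  have hcont : ContinuousOn (fun z => fderiv ℝ φ x z * (αr * ‖z‖ ^ (-(2 * r) - N))) {0}ᶜ :=
    (fderiv ℝ φ x).continuous.continuousOn.mul (continuousOn_const.mul
      (continuous_norm.continuousOn.rpow_const fun z hz => .inl (norm_ne_zero_iff.2 hz)))
  have hfar : ∀ z, ρ / 2 ≤ ‖z‖ → |rescaledIntegrand N r s c αs αr αc lam φ x (x + z)| ≤
      2 * |αr| * M * ‖z‖ ^ (-(2 * r) - N) + (ball (-x) (1 / lam)).indicator (fun _ => D) z := by
    intro z hz
    rcases lt_or_ge ‖x + z‖ (1 / lam) with hxz | hxz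
    · have hmem : z ∈ ball (-x) (1 / lam) := by
        rwa [mem_ball_iff_norm, sub_neg_eq_add, add_comm]
      rw [indicator_of_mem hmem]
      exact (hcoupling z hz hxz).trans (le_add_of_nonneg_left (by positivity))
    · exact (abs_rescaledIntegrand_le hM
        (rescaledKernel_of_exterior_of_exterior hx hxz)).trans
          (le_add_of_nonneg_right (indicator_nonneg (fun _ _ => hD) z))
  have hℓ := h.abs_le_of_near_far hodd hcont hρ ha (mul_pos two_pos hr.1) hD measurableSet_ball
    measure_ball_lt_top.ne
    (fun z => abs_rescaledIntegrand_sub_fderiv_le hφ hM₂ hφ_const hlamρ hx) hfar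
  rw [volume_real_ball _ (one_div_pos.2 hlam)] at hℓ
  refine hℓ.trans (add_le_add_left ?_ _)
  exact radial_bound_le_exteriorConst_mul hr (by linarith) hM_nonneg

lemma abs_pv_rescaledIntegrand_le_of_exterior [NeZero N] (hr : r ∈ Ioo 0 1) (hc : 0 ≤ c)
    (hlam : 0 < lam) (hlamρ : 1 / lam < ρ / 2) (hφ : Differentiable ℝ φ) (hM : ∀ x, |φ x| ≤ M)
    (hM₂ : LipschitzWith M₂ (fderiv ℝ φ)) (hφ_const : ∀ x, ‖x‖ < ρ → φ x = φ 0)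
    (hx : 1 / lam ≤ ‖x‖)
    (h : IsPVIntegral (rescaledIntegrand N r s c αs αr αc lam φ x) x ℓ) :
    |ℓ| ≤ exteriorConst N r αr * (ρ ^ (2 - 2 * r) * M₂ + ρ ^ (-(2 * r)) * M) +
      couplingConst N c αc * (lam ^ (2 * r - 2 * c - N) * ρ ^ (-(N : ℝ) - 2 * c) * M) := by
  have hρ : 0 < ρ := by linarith [one_div_pos.2 hlam]
  have hM_nonneg : 0 ≤ M := (abs_nonneg _).trans (hM 0)
  have hℓ := abs_pv_rescaledIntegrand_le_of_coupling_le hr hlam hlamρ hφ hM hM₂ hφ_const hx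
    (by positivity)
    (fun z hz hxz => abs_rescaledIntegrand_le_of_exterior_of_interior hM hc hlam hρ hx hxz hz) h
  refine hℓ.trans_eq (congrArg _ ?_)
  rw [← neg_add', div_two_rpow_neg hρ.le, ← neg_add', add_comm (N : ℝ),
    Real.rpow_sub_natCast hlam.ne', couplingConst]
  ring

lemma abs_pv_rescaledIntegrand_le_of_plateau [NeZero N] (hr : r ∈ Ioo 0 1) (hlam : 0 < lam)
    (hlamρ : 1 / lam < ρ / 2) (hφ : Differentiable ℝ φ) (hM : ∀ x, |φ x| ≤ M)
    (hM₂ : LipschitzWith M₂ (fderiv ℝ φ)) (hφ_const : ∀ x, ‖x‖ < ρ → φ x = φ 0)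
    (hx : 1 / lam ≤ ‖x‖) (hxρ : ‖x‖ < ρ)
    (h : IsPVIntegral (rescaledIntegrand N r s c αs αr αc lam φ x) x ℓ) :
    |ℓ| ≤ exteriorConst N r αr * (ρ ^ (2 - 2 * r) * M₂ + ρ ^ (-(2 * r)) * M) := by
  have hcoupling : ∀ z, ρ / 2 ≤ ‖z‖ → ‖x + z‖ < 1 / lam →
      |rescaledIntegrand N r s c αs αr αc lam φ x (x + z)| ≤ 0 := fun z _ hxz => by
    rw [rescaledIntegrand_eq_zero hφ_const hxρ (by linarith [norm_nonneg x]), abs_zero]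
  simpa using abs_pv_rescaledIntegrand_le_of_coupling_le hr hlam hlamρ hφ hM hM₂ hφ_const hx le_rfl
    hcoupling h

end RescaledOperator

theorem rescaled_operator_bounds_general (N : ℕ) (hN : 1 ≤ N) (r c : ℝ)
    (hr : r ∈ Ioo (0 : ℝ) 1) (hc : 0 < c) (αr αc : ℝ) :
    ∃ C : ℝ, 0 < C ∧ ∀ s αs ρ lam : ℝ, 0 < lam → 1 / lam < ρ / 2 →
      ∀ φ : EuclideanSpace ℝ (Fin N) → ℝ, Differentiable ℝ φ →
      ∀ (Mφ : ℝ) (M₂ : ℝ≥0), (∀ x, |φ x| ≤ Mφ) → LipschitzWith M₂ (fderiv ℝ φ) →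
      (∀ x : EuclideanSpace ℝ (Fin N), ‖x‖ < ρ → φ x = φ 0) →
      ∀ x : EuclideanSpace ℝ (Fin N), ∀ ℓ : ℝ,
        IsPVIntegral (rescaledIntegrand N r s c αs αr αc lam φ x) x ℓ →
        (‖x‖ < 1 / lam → |ℓ| ≤ C * lam ^ (2 * r - 2 * c) * ρ ^ (-(2 * c)) * Mφ) ∧
        (1 / lam ≤ ‖x‖ → ‖x‖ < ρ →
          |ℓ| ≤ C * (ρ ^ (2 - 2 * r) * M₂ + ρ ^ (-(2 * r)) * Mφ)) ∧
        (1 / lam ≤ ‖x‖ →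
          |ℓ| ≤ C * (ρ ^ (2 - 2 * r) * M₂ +
            (ρ ^ (-(2 * r)) + lam ^ (2 * r - 2 * c - (N : ℝ)) * ρ ^ (-(N : ℝ) - 2 * c)) * Mφ)) := by
  have : NeZero N := ⟨Nat.one_le_iff_ne_zero.1 hN⟩
  have hI := interiorConst_nonneg N hc.le αc
  have hE := exteriorConst_nonneg N hr αr
  have hO := couplingConst_nonneg N c αc
  set C := 1 + interiorConst N c αc + exteriorConst N r αr + couplingConst N c αc
  refine ⟨C, by positivity, fun s αs ρ lam hlam hlamρ φ hφ Mφ M₂ hM hM₂ hφ_const x ℓ h => ?_⟩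
  have hρ : 0 < ρ := by linarith [one_div_pos.2 hlam]
  have hM_nonneg : 0 ≤ Mφ := (abs_nonneg _).trans (hM 0)
  refine ⟨fun hx => ?_, fun hx hxρ => ?_, fun hx => ?_⟩
  · rw [mul_assoc, mul_assoc, ← mul_assoc (lam ^ _)]
    refine (abs_pv_rescaledIntegrand_le_of_interior hc hlam hlamρ hM hφ_const hx h).trans ?_
    gcongr
    linarith
  · refine (abs_pv_rescaledIntegrand_le_of_plateau hr hlam hlamρ hφ hM hM₂ hφ_const hx hxρ
      h).trans ?_
    gcongr
    linarith
  · rw [add_mul (ρ ^ (-(2 * r))), ← add_assoc, mul_add C]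
    refine (abs_pv_rescaledIntegrand_le_of_exterior hr hc.le hlam hlamρ hφ hM hM₂ hφ_const hx
      h).trans ?_
    gcongr <;> linarith

/-- Pointwise bounds for the rescaled operator `L_λ` applied to a `W^{2,∞}` function which is
constant on the ball `B_ρ(0)`, where `1/λ < ρ/2`. -/
theorem rescaled_operator_bounds (N : ℕ) (hN : 1 ≤ N) (r s c : ℝ)
    (hr : r ∈ Set.Ioo (0 : ℝ) 1) (hs : s ∈ Set.Ioo (0 : ℝ) 1) (hc : c ∈ Set.Ioo (0 : ℝ) 1)
    (αs αr αc : ℝ) (hαs : 0 < αs) (hαr : 0 < αr) (hαc : 0 < αc) :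
    ∃ C : ℝ, 0 < C ∧ ∀ ρ lam : ℝ, 0 < ρ → 0 < lam → 1 / lam < ρ / 2 →
      ∀ φ : EuclideanSpace ℝ (Fin N) → ℝ, ContDiff ℝ 2 φ →
      ∀ Mφ M₂ : ℝ, (∀ x, |φ x| ≤ Mφ) → (∀ x, ‖iteratedFDeriv ℝ 2 φ x‖ ≤ M₂) →
      (∀ x : EuclideanSpace ℝ (Fin N), ‖x‖ < ρ → φ x = φ 0) →
      ∀ x : EuclideanSpace ℝ (Fin N), ∀ ℓ : ℝ,
        IsPVIntegral (fun y => (φ y - φ x) * rescaledKernel N r s c αs αr αc lam x y) x ℓ →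
        (‖x‖ < 1 / lam → |ℓ| ≤ C * lam ^ (2 * r - 2 * c) * ρ ^ (-(2 * c)) * Mφ) ∧
        (1 / lam < ‖x‖ → ‖x‖ < ρ →
          |ℓ| ≤ C * (ρ ^ (2 - 2 * r) * M₂ + ρ ^ (-(2 * r)) * Mφ)) ∧
        (ρ < ‖x‖ →
          |ℓ| ≤ C * (ρ ^ (2 - 2 * r) * M₂ +
            (ρ ^ (-(2 * r)) + lam ^ (2 * r - 2 * c - (N : ℝ)) * ρ ^ (-(N : ℝ) - 2 * c)) * Mφ)) := by
  obtain ⟨C, hC, hbounds⟩ := rescaled_operator_bounds_general N hN r c hr hc.1 αr αc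
  refine ⟨C, hC, fun ρ lam _ hlam hlamρ φ hφ Mφ M₂ hM hM₂ hφ_const x ℓ h => ?_⟩
  lift M₂ to ℝ≥0 using (norm_nonneg _).trans (hM₂ 0)
  obtain ⟨hinterior, hplateau, hexterior⟩ := hbounds s αs ρ lam hlam hlamρ φ
    (hφ.differentiable two_ne_zero) Mφ M₂ hM
    (lipschitzWith_fderiv_of_norm_iteratedFDeriv_two_le hφ hM₂) hφ_const x ℓ h
  exact ⟨hinterior, fun hx => hplateau hx.le, fun hx => hexterior (by linarith)⟩
end
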